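/- A function parameter is a continuous positive function $\rho$ on $(0,\infty)$. For a positive function $\rho$ on $(0,\infty)$ put $\bar\rho(s)=\sup_{t>0}\rho(st)/\rho(t)$, $s>0$. A function parameter $\rho$ is of class $\mathcal B$ if $\rho(1)=1$ and $\bar\rho(s)<\infty$ for every $s>0$; it is of class $\mathcal B^{+-}$ if moreover $\int_0^\infty \min(1,1/t)\,\bar\rho(t)\,\frac{dt}{t}<\infty$. Call $\rho$ normalized if $\rho(t)$ is non-decreasing and $\rho(t)/t$ is non-increasing on $(0,\infty)$, and call two positive functions $\rho,\sigma$ on $(0,\infty)$ equivalent if $c\rho\le\sigma\le C\rho$ for some constants $c,C>0$. Let $\rho$ be a function parameter of class $\mathcal B^{+-}$ and define $\gamma(t)=1/\bar\rho(t^{-1})$, $t>0$. Then: 1. $\bar\gamma(t)\le\bar\rho(t)<\infty$ for all $t>0$; and $\gamma$ is positive, $\gamma(1)=1$ and $\int_0^\infty \min(1,1/t)\,\bar\gamma(t)\,\frac{dt}{t}<\infty$, that is, $\gamma$ satisfies all the conditions of class $\mathcal B^{+-}$ except possibly continuity. 2. If $\rho$ is normalized, then $\gamma$ is a function parameter of class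 $\mathcal B^{+-}$. 3. In general, there is a normalized function parameter $\rho_1$ of class $\mathcal B^{+-}$ equivalent to $\rho$ such that $\gamma_1(t)=1/\bar\rho_1(t^{-1})$ is a function parameter of class $\mathcal B^{+-}$ equivalent to $\gamma$. -/

import Mathlib

noncomputable section

/-- The set of quotients `ρ(st)/ρ(t)`, `t > 0`. -/
def quotients (ρ : ℝ → ℝ) (s : ℝ) : Set ℝ := {r : ℝ | ∃ t > 0, r = ρ (s * t) / ρ t}

/-- `rbar ρ s = sup_{t>0} ρ(st)/ρ(t)`; used where `quotients ρ s` is bounded above. -/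
def rbar (ρ : ℝ → ℝ) (s : ℝ) : ℝ := sSup (quotients ρ s)

/-- A function parameter: a continuous positive function on `(0,∞)`
(values outside `(0,∞)` are irrelevant). -/
structure IsFunctionParameter (ρ : ℝ → ℝ) : Prop where
  pos : ∀ t > 0, 0 < ρ t
  cont : ContinuousOn ρ (Set.Ioi 0)

/-- The class `ℬ` of function parameters. -/
structure IsClassB (ρ : ℝ → ℝ) : Prop extends IsFunctionParameter ρ where
  one : ρ 1 = 1
  bdd : ∀ s > 0, BddAbove (quotients ρ s)

/-- `∫₀^∞ min(1,1/t) ρ̄(t) dt/t < ∞`. -/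
def FiniteIntegral (ρ : ℝ → ℝ) : Prop :=
  MeasureTheory.IntegrableOn (fun t => min 1 (1 / t) * rbar ρ t / t) (Set.Ioi 0)

/-- The class `ℬ^{+-}` of function parameters. -/
structure IsClassBpm (ρ : ℝ → ℝ) : Prop extends IsClassB ρ where
  integ : FiniteIntegral ρ

/-- `ρ(t)` is non-decreasing and `ρ(t)/t` is non-increasing on `(0,∞)`. -/
def IsNormalized (ρ : ℝ → ℝ) : Prop :=
  MonotoneOn ρ (Set.Ioi 0) ∧ AntitoneOn (fun t => ρ t / t) (Set.Ioi 0)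

/-- Equivalence of positive functions on `(0,∞)`. -/
def ParamEquiv (ρ σ : ℝ → ℝ) : Prop :=
  ∃ c > 0, ∃ C > 0, ∀ t > 0, c * ρ t ≤ σ t ∧ σ t ≤ C * ρ t

/-- `γ(t) = 1/ρ̄(t⁻¹)`. -/
def gam (ρ : ℝ → ℝ) (t : ℝ) : ℝ := 1 / rbar ρ t⁻¹

end

open MeasureTheory Set

section Rbar

variable {ρ σ : ℝ → ℝ} {s t M : ℝ}

theorem bddAbove_quotients_of_le (hpos : ∀ t > 0, 0 < ρ t)
    (h : ∀ t > 0, ρ (s * t) ≤ M * ρ t) : BddAbove (quotients ρ s) := by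
  refine ⟨M, ?_⟩
  rintro r ⟨t, ht, rfl⟩
  exact (div_le_iff₀ (hpos t ht)).2 (h t ht)

theorem rbar_le_of_le (hpos : ∀ t > 0, 0 < ρ t)
    (h : ∀ t > 0, ρ (s * t) ≤ M * ρ t) : rbar ρ s ≤ M := by
  refine csSup_le ⟨_, 1, one_pos, rfl⟩ ?_
  rintro r ⟨t, ht, rfl⟩
  exact (div_le_iff₀ (hpos t ht)).2 (h t ht)

namespace IsClassB

theorem div_le_rbar (h : IsClassB ρ) (hs : 0 < s) (ht : 0 < t) :
    ρ (s * t) / ρ t ≤ rbar ρ s :=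
  le_csSup (h.bdd s hs) ⟨t, ht, rfl⟩

theorem le_rbar_mul (h : IsClassB ρ) (hs : 0 < s) (ht : 0 < t) :
    ρ (s * t) ≤ rbar ρ s * ρ t :=
  (div_le_iff₀ (h.pos t ht)).1 (h.div_le_rbar hs ht)

theorem rbar_pos (h : IsClassB ρ) (hs : 0 < s) : 0 < rbar ρ s :=
  (div_pos (h.pos (s * 1) (by positivity)) (h.pos 1 one_pos)).trans_le (h.div_le_rbar hs one_pos)

theorem rbar_one (h : IsClassB ρ) : rbar ρ 1 = 1 := by
  apply le_antisymm
  · exact rbar_le_of_le h.pos fun t _ => by simp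
  · simpa [h.one] using h.div_le_rbar one_pos one_pos

theorem rbar_mul_le (h : IsClassB ρ) (hs : 0 < s) (ht : 0 < t) :
    rbar ρ (s * t) ≤ rbar ρ s * rbar ρ t := by
  refine rbar_le_of_le h.pos fun u hu => ?_
  calc ρ (s * t * u) = ρ (s * (t * u)) := by rw [mul_assoc]
    _ ≤ rbar ρ s * ρ (t * u) := h.le_rbar_mul hs (by positivity)
    _ ≤ rbar ρ s * (rbar ρ t * ρ u) :=
        mul_le_mul_of_nonneg_left (h.le_rbar_mul ht hu) (h.rbar_pos hs).le
    _ = _ := by ring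

theorem gam_pos (h : IsClassB ρ) (ht : 0 < t) : 0 < gam ρ t :=
  one_div_pos.2 (h.rbar_pos (inv_pos.2 ht))

theorem gam_one (h : IsClassB ρ) : gam ρ 1 = 1 := by
  simp [gam, h.rbar_one]

theorem gam_mul_le (h : IsClassB ρ) (hs : 0 < s) (ht : 0 < t) :
    gam ρ (s * t) ≤ rbar ρ s * gam ρ t := by
  have hst : 0 < s * t := by positivity
  have key := h.rbar_mul_le hs (inv_pos.2 hst)
  rw [show s * (s * t)⁻¹ = t⁻¹ by field_simp] at key
  have h₁ := h.rbar_pos (inv_pos.2 ht)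
  have h₂ := h.rbar_pos (inv_pos.2 hst)
  unfold gam
  rw [mul_one_div, div_le_div_iff₀ h₂ h₁]
  linarith

theorem bddAbove_quotients_gam (h : IsClassB ρ) (hs : 0 < s) :
    BddAbove (quotients (gam ρ) s) :=
  bddAbove_quotients_of_le (fun _ ht => h.gam_pos ht) fun _ ht => h.gam_mul_le hs ht

theorem rbar_gam (h : IsClassB ρ) (hs : 0 < s) : rbar (gam ρ) s = rbar ρ s := by
  apply le_antisymm
  · exact rbar_le_of_le (fun _ ht => h.gam_pos ht) fun _ ht => h.gam_mul_le hs ht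
  · refine le_csSup (h.bddAbove_quotients_gam hs) ⟨s⁻¹, inv_pos.2 hs, ?_⟩
    rw [mul_inv_cancel₀ hs.ne', h.gam_one, gam, inv_inv, one_div_one_div]

theorem gam_le_rbar (h : IsClassB ρ) (ht : 0 < t) : gam ρ t ≤ rbar ρ t := by
  simpa [h.gam_one] using h.gam_mul_le ht one_pos

theorem gam_mul_self_le (h : IsClassB ρ) (hs : 0 < s) (ht : 0 < t) :
    gam ρ s * ρ t ≤ ρ (t * s) := by
  have key := h.le_rbar_mul (inv_pos.2 hs) (mul_pos ht hs)
  rw [show s⁻¹ * (t * s) = t by field_simp] at key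
  rw [gam, one_div_mul_eq_div, div_le_iff₀ (h.rbar_pos (inv_pos.2 hs))]
  linarith

/-- As a supremum of continuous functions, `ρ̄` is lower semicontinuous, hence measurable. -/
theorem measurable_indicator_rbar (h : IsClassB ρ) :
    Measurable ((Ioi 0).indicator (rbar ρ)) := by
  refine measurable_of_Ioi fun M => ?_
  rcases lt_or_ge M 0 with hM | hM
  · convert MeasurableSet.univ
    refine eq_univ_of_forall fun s => hM.trans_le ?_
    exact indicator_nonneg (fun s hs => (h.rbar_pos hs).le) s
  · have : (Ioi 0).indicator (rbar ρ) ⁻¹' Ioi M =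
        ⋃ t ∈ Ioi (0 : ℝ), (Ioi 0 ∩ (fun s => ρ (s * t) / ρ t) ⁻¹' Ioi M) := by
      ext s
      simp only [mem_preimage, mem_Ioi, mem_iUnion, mem_inter_iff, exists_prop]
      constructor
      · intro hs
        have hs0 : 0 < s := by
          by_contra hn
          rw [indicator_of_notMem (by simpa using hn)] at hs
          exact hs.not_ge hM
        rw [indicator_of_mem (mem_Ioi.2 hs0)] at hs
        obtain ⟨r, ⟨t, ht, rfl⟩, hr⟩ :=
          exists_lt_of_lt_csSup (s := quotients ρ s) ⟨_, 1, one_pos, rfl⟩ hs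
        exact ⟨t, ht, hs0, hr⟩
      · rintro ⟨t, ht, hs0, hr⟩
        rw [indicator_of_mem (mem_Ioi.2 hs0)]
        exact hr.trans_le (h.div_le_rbar hs0 ht)
    rw [this]
    refine (isOpen_biUnion fun t ht => ?_).measurableSet
    refine ContinuousOn.isOpen_inter_preimage ?_ isOpen_Ioi isOpen_Ioi
    refine ContinuousOn.div_const (h.cont.comp (by fun_prop) fun s hs => ?_) _
    exact mul_pos (mem_Ioi.1 hs) (mem_Ioi.1 ht)

end IsClassB

theorem ParamEquiv.exists_rbar_le (hρ : IsClassB ρ) (h : ParamEquiv ρ σ) :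
    ∃ K > 0, ∀ s > 0, ∀ t > 0, σ (s * t) ≤ K * rbar ρ s * σ t := by
  obtain ⟨c, hc, C, hC, hcC⟩ := h
  refine ⟨C / c, by positivity, fun s hs t ht => ?_⟩
  calc σ (s * t) ≤ C * ρ (s * t) := (hcC _ (mul_pos hs ht)).2
    _ ≤ C * (rbar ρ s * ρ t) := mul_le_mul_of_nonneg_left (hρ.le_rbar_mul hs ht) hC.le
    _ = C / c * rbar ρ s * (c * ρ t) := by field_simp
    _ ≤ _ := mul_le_mul_of_nonneg_left (hcC t ht).1
        (mul_nonneg (by positivity) (hρ.rbar_pos hs).le)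

theorem ParamEquiv.symm (h : ParamEquiv ρ σ) : ParamEquiv σ ρ := by
  obtain ⟨c, hc, C, hC, hcC⟩ := h
  refine ⟨C⁻¹, by positivity, c⁻¹, by positivity, fun t ht => ⟨?_, ?_⟩⟩
  · rw [inv_mul_le_iff₀ hC]; exact (hcC t ht).2
  · rw [le_inv_mul_iff₀ hc]; exact (hcC t ht).1

theorem ParamEquiv.gam (hρ : IsClassB ρ) (hσ : IsClassB σ) (h : ParamEquiv ρ σ) :
    ParamEquiv (gam ρ) (gam σ) := by
  obtain ⟨K, hK, h₁⟩ := h.exists_rbar_le hρ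
  obtain ⟨L, hL, h₂⟩ := h.symm.exists_rbar_le hσ
  refine ⟨K⁻¹, by positivity, L, hL, fun t ht => ?_⟩
  have ht' := inv_pos.2 ht
  have a := rbar_le_of_le hσ.pos (h₁ _ ht')
  have b := rbar_le_of_le hρ.pos (h₂ _ ht')
  have pa := hρ.rbar_pos ht'
  have pb := hσ.rbar_pos ht'
  unfold _root_.gam
  constructor
  · rw [one_div, ← mul_inv, ← one_div]
    exact one_div_le_one_div_of_le pb a
  · rw [mul_one_div, div_le_div_iff₀ pb pa]
    linarith

end Rbar

section Normalized

variable {ρ : ℝ → ℝ}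

theorem IsNormalized.continuousOn (h : IsNormalized ρ) : ContinuousOn ρ (Ioi 0) := by
  intro a ha
  have ha' : 0 < a := ha
  refine ContinuousAt.continuousWithinAt ?_
  have hlin : Filter.Tendsto (fun x => ρ a / a * x) (nhds a) (nhds (ρ a)) := by
    have : ContinuousAt (fun x => ρ a / a * x) a := by fun_prop
    simpa [ContinuousAt, div_mul_cancel₀ _ ha'.ne'] using this
  have hmin := (tendsto_const_nhds (x := ρ a)).min hlin
  have hmax := (tendsto_const_nhds (x := ρ a)).max hlin
  rw [min_self] at hmin
  rw [max_self] at hmax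
  refine tendsto_of_tendsto_of_tendsto_of_le_of_le' hmin hmax ?_ ?_
  · filter_upwards [Ioi_mem_nhds ha'] with x (hx : 0 < x)
    rcases le_total a x with hax | hxa
    · exact (min_le_left _ _).trans (h.1 ha hx hax)
    · refine (min_le_right _ _).trans ?_
      exact (le_div_iff₀ hx).1 (h.2 hx ha hxa)
  · filter_upwards [Ioi_mem_nhds ha'] with x (hx : 0 < x)
    rcases le_total a x with hax | hxa
    · refine le_trans ?_ (le_max_right _ _)
      exact (div_le_iff₀ hx).1 (h.2 ha hx hax)
    · exact (h.1 hx ha hxa).trans (le_max_left _ _)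

theorem IsNormalized.rbar (hρ : IsClassB ρ) (h : IsNormalized ρ) : IsNormalized (rbar ρ) := by
  refine ⟨fun s hs t ht hst => ?_, fun s hs t ht hst => ?_⟩
  · refine rbar_le_of_le hρ.pos fun u hu => le_trans ?_ (hρ.le_rbar_mul ht hu)
    exact h.1 (mul_pos hs hu) (mul_pos ht hu) (mul_le_mul_of_nonneg_right hst hu.le)
  · have hs' : 0 < s := hs
    have ht' : 0 < t := ht
    change _root_.rbar ρ t / t ≤ _root_.rbar ρ s / s
    rw [div_le_iff₀ ht']
    refine rbar_le_of_le hρ.pos fun u hu => ?_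
    have hsu : 0 < s * u := mul_pos hs hu
    have htu : 0 < t * u := mul_pos ht hu
    have key : ρ (t * u) / (t * u) ≤ ρ (s * u) / (s * u) :=
      h.2 hsu htu (mul_le_mul_of_nonneg_right hst hu.le)
    calc ρ (t * u) ≤ ρ (s * u) / (s * u) * (t * u) := (div_le_iff₀ htu).1 key
      _ = t / s * ρ (s * u) := by field_simp
      _ ≤ t / s * (_root_.rbar ρ s * ρ u) :=
          mul_le_mul_of_nonneg_left (hρ.le_rbar_mul hs hu) (by positivity)
      _ = _ := by ring

theorem IsNormalized.continuousOn_gam (hρ : IsClassB ρ) (h : IsNormalized ρ) :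
    ContinuousOn (gam ρ) (Ioi 0) := by
  refine ContinuousOn.div continuousOn_const ?_ fun t ht => (hρ.rbar_pos (inv_pos.2 ht)).ne'
  refine (h.rbar hρ).continuousOn.comp ?_ fun t ht => mem_Ioi.2 (inv_pos.2 ht)
  exact continuousOn_inv₀.mono fun t (ht : 0 < t) => ht.ne'

theorem IsClassBpm.finiteIntegral_gam (h : IsClassBpm ρ) : FiniteIntegral (gam ρ) := by
  refine IntegrableOn.congr_fun h.integ (fun t ht => ?_) measurableSet_Ioi
  simp only [h.toIsClassB.rbar_gam ht]

theorem IsNormalized.isClassBpm_gam (hρ : IsClassBpm ρ) (h : IsNormalized ρ) :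
    IsClassBpm (gam ρ) where
  pos _ ht := hρ.toIsClassB.gam_pos ht
  cont := h.continuousOn_gam hρ.toIsClassB
  one := hρ.toIsClassB.gam_one
  bdd _ hs := hρ.toIsClassB.bddAbove_quotients_gam hs
  integ := hρ.finiteIntegral_gam

end Normalized

section Averaging

variable {ρ : ℝ → ℝ}

/-- The average `∫₀^∞ min(1,t/s) ρ(s) ds/s`. -/
noncomputable def kernelAverage (ρ : ℝ → ℝ) (t : ℝ) : ℝ :=
  ∫ s in Ioi 0, min 1 (t / s) * ρ s / s

theorem min_comp_mul_left {t : ℝ} (ht : 0 < t) {u : ℝ} :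
    min 1 (t / (t * u)) * ρ (t * u) / (t * u) = t⁻¹ * (min 1 (1 / u) * ρ (t * u) / u) := by
  rw [show t / (t * u) = 1 / u by rw [div_mul_eq_div_div, div_self ht.ne']]
  rw [div_mul_eq_div_div, div_right_comm]
  ring

theorem kernelAverage_eq {t : ℝ} (ht : 0 < t) :
    kernelAverage ρ t = ∫ u in Ioi 0, min 1 (1 / u) * ρ (t * u) / u := by
  have := integral_comp_mul_left_Ioi (fun s => min 1 (t / s) * ρ s / s) 0 ht
  simp only [min_comp_mul_left ht, integral_const_mul, mul_zero, smul_eq_mul] at this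
  exact (mul_left_cancel₀ (inv_ne_zero ht.ne') this).symm

namespace IsClassBpm

theorem integrableOn_dilated (h : IsClassBpm ρ) {t : ℝ} (ht : 0 < t) :
    IntegrableOn (fun u => min 1 (1 / u) * ρ (t * u) / u) (Ioi 0) := by
  refine Integrable.mono' (h.integ.mul_const (ρ t)) ?_ ?_
  · refine ContinuousOn.aestronglyMeasurable (fun u hu => ?_) measurableSet_Ioi
    have hu' : u ≠ 0 := (mem_Ioi.1 hu).ne'
    have hρ : ContinuousWithinAt (fun u => ρ (t * u)) (Ioi 0) u :=
      (h.cont.comp (f := fun u => t * u) (by fun_prop) fun u hu => mul_pos ht hu) u hu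
    have hi : ContinuousWithinAt (fun u : ℝ => 1 / u) (Ioi 0) u :=
      (continuousAt_const.div continuousAt_id hu').continuousWithinAt
    exact ((continuousWithinAt_const.min hi).mul hρ).div continuousWithinAt_id hu'
  · filter_upwards [ae_restrict_mem measurableSet_Ioi] with u (hu : 0 < u)
    have hp := h.pos (t * u) (mul_pos ht hu)
    have hm : 0 < min 1 (1 / u) := lt_min one_pos (by positivity)
    rw [Real.norm_of_nonneg (by positivity)]
    have key : ρ (t * u) ≤ rbar ρ u * ρ t := by
      rw [mul_comm t u]; exact h.toIsClassB.le_rbar_mul hu ht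
    calc min 1 (1 / u) * ρ (t * u) / u ≤ min 1 (1 / u) * (rbar ρ u * ρ t) / u := by gcongr
      _ = _ := by ring

theorem integrableOn_kernel (h : IsClassBpm ρ) {t : ℝ} (ht : 0 < t) :
    IntegrableOn (fun s => min 1 (t / s) * ρ s / s) (Ioi 0) := by
  have := integrableOn_Ioi_comp_mul_left_iff (fun s => min 1 (t / s) * ρ s / s) 0 ht
  rw [mul_zero] at this
  refine this.1 ?_
  simp only [min_comp_mul_left ht]
  exact (h.integrableOn_dilated ht).const_mul _

theorem monotoneOn_kernelAverage (h : IsClassBpm ρ) :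
    MonotoneOn (kernelAverage ρ) (Ioi 0) := by
  intro s hs t ht hst
  refine setIntegral_mono_on (h.integrableOn_kernel hs) (h.integrableOn_kernel ht)
    measurableSet_Ioi fun u (hu : 0 < u) => ?_
  have := h.pos u hu
  gcongr

theorem antitoneOn_kernelAverage_div (h : IsClassBpm ρ) :
    AntitoneOn (fun t => kernelAverage ρ t / t) (Ioi 0) := by
  intro s hs t ht hst
  have hs' : 0 < s := hs
  have ht' : 0 < t := ht
  simp only [kernelAverage]
  rw [← integral_div, ← integral_div]
  refine setIntegral_mono_on ((h.integrableOn_kernel ht).div_const _)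
    ((h.integrableOn_kernel hs).div_const _) measurableSet_Ioi fun u (hu : 0 < u) => ?_
  have hp := h.pos u hu
  have key : min 1 (t / u) / t ≤ min 1 (s / u) / s := by
    rw [← min_div_div_right ht'.le, ← min_div_div_right hs'.le]
    refine min_le_min (one_div_le_one_div_of_le hs' hst) (le_of_eq ?_)
    field_simp
  calc min 1 (t / u) * ρ u / u / t = min 1 (t / u) / t * (ρ u / u) := by ring
    _ ≤ min 1 (s / u) / s * (ρ u / u) := by gcongr
    _ = _ := by ring

theorem integrableOn_gam (h : IsClassBpm ρ) :
    IntegrableOn (fun u => min 1 (1 / u) * gam ρ u / u) (Ioi 0) := by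
  refine Integrable.mono' h.integ ?_ ?_
  · have hm := h.toIsClassB.measurable_indicator_rbar
    have : Measurable fun u : ℝ =>
        min 1 (1 / u) * (1 / (Ioi 0).indicator (rbar ρ) u⁻¹) / u := by
      have := hm.comp measurable_inv
      simp only [Function.comp_def] at this
      fun_prop
    refine this.aestronglyMeasurable.congr ?_
    filter_upwards [ae_restrict_mem measurableSet_Ioi] with u hu
    rw [indicator_of_mem (mem_Ioi.2 (inv_pos.2 hu)), gam]
  · filter_upwards [ae_restrict_mem measurableSet_Ioi] with u (hu : 0 < u)
    have hp := h.toIsClassB.gam_pos hu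
    have hm : 0 < min 1 (1 / u) := lt_min one_pos (by positivity)
    rw [Real.norm_of_nonneg (by positivity)]
    have := h.toIsClassB.gam_le_rbar hu
    gcongr

theorem paramEquiv_kernelAverage (h : IsClassBpm ρ) : ParamEquiv ρ (kernelAverage ρ) := by
  have hg := h.integrableOn_gam
  have hgpos : ∀ u ∈ Ioi (0 : ℝ), 0 < min 1 (1 / u) * gam ρ u / u := fun u (hu : 0 < u) => by
    have hp := h.toIsClassB.gam_pos hu
    have hm : 0 < min 1 (1 / u) := lt_min one_pos (by positivity)
    positivity
  have hc : 0 < ∫ u in Ioi 0, min 1 (1 / u) * gam ρ u / u := by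
    rw [setIntegral_pos_iff_support_of_nonneg_ae
      ((ae_restrict_mem measurableSet_Ioi).mono fun u hu => (hgpos u hu).le) hg]
    have hsub : Ioi 0 ⊆ Function.support fun u => min 1 (1 / u) * gam ρ u / u :=
      fun u hu => (hgpos u hu).ne'
    rw [inter_eq_self_of_subset_right hsub]
    simp
  have hle : (∫ u in Ioi 0, min 1 (1 / u) * gam ρ u / u) ≤
      ∫ u in Ioi 0, min 1 (1 / u) * rbar ρ u / u := by
    refine setIntegral_mono_on hg h.integ measurableSet_Ioi fun u (hu : 0 < u) => ?_
    have hm : 0 < min 1 (1 / u) := lt_min one_pos (by positivity)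
    have := h.toIsClassB.gam_le_rbar hu
    gcongr
  refine ⟨_, hc, _, hc.trans_le hle, fun t ht => ?_⟩
  rw [kernelAverage_eq ht, ← integral_mul_const, ← integral_mul_const]
  constructor
  · refine setIntegral_mono_on (hg.mul_const _) (h.integrableOn_dilated ht)
      measurableSet_Ioi fun u (hu : 0 < u) => ?_
    have hm : 0 < min 1 (1 / u) := lt_min one_pos (by positivity)
    calc min 1 (1 / u) * gam ρ u / u * ρ t = min 1 (1 / u) * (gam ρ u * ρ t) / u := by ring
      _ ≤ _ := by
        have := h.toIsClassB.gam_mul_self_le hu ht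
        gcongr
  · refine setIntegral_mono_on (h.integrableOn_dilated ht) (h.integ.mul_const _)
      measurableSet_Ioi fun u (hu : 0 < u) => ?_
    have hm : 0 < min 1 (1 / u) := lt_min one_pos (by positivity)
    have key := h.toIsClassB.le_rbar_mul hu ht
    rw [mul_comm u t] at key
    calc min 1 (1 / u) * ρ (t * u) / u ≤ min 1 (1 / u) * (rbar ρ u * ρ t) / u := by gcongr
      _ = _ := by ring

theorem of_paramEquiv {σ : ℝ → ℝ} (hρ : IsClassBpm ρ) (hσ : ∀ t > 0, 0 < σ t)
    (hσ1 : σ 1 = 1) (hn : IsNormalized σ) (h : ParamEquiv ρ σ) : IsClassBpm σ := by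
  obtain ⟨K, hK, hle⟩ := h.exists_rbar_le hρ.toIsClassB
  have hB : IsClassB σ :=
    { pos := hσ
      cont := hn.continuousOn
      one := hσ1
      bdd := fun s hs => bddAbove_quotients_of_le hσ (hle s hs) }
  refine { hB with integ := ?_ }
  refine Integrable.mono' (hρ.integ.const_mul K) ?_ ?_
  · refine ContinuousOn.aestronglyMeasurable (fun u hu => ?_) measurableSet_Ioi
    have hu' : u ≠ 0 := (mem_Ioi.1 hu).ne'
    have hi : ContinuousWithinAt (fun u : ℝ => 1 / u) (Ioi 0) u :=
      (continuousAt_const.div continuousAt_id hu').continuousWithinAt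
    exact ((continuousWithinAt_const.min hi).mul ((hn.rbar hB).continuousOn u hu)).div
      continuousWithinAt_id hu'
  · filter_upwards [ae_restrict_mem measurableSet_Ioi] with u (hu : 0 < u)
    have hp := hB.rbar_pos hu
    have hm : 0 < min 1 (1 / u) := lt_min one_pos (by positivity)
    rw [Real.norm_of_nonneg (by positivity)]
    have key := rbar_le_of_le hσ (hle u hu)
    calc min 1 (1 / u) * rbar σ u / u ≤ min 1 (1 / u) * (K * rbar ρ u) / u := by gcongr
      _ = _ := by ring

theorem exists_normalized (h : IsClassBpm ρ) :
    ∃ ρ₁ : ℝ → ℝ, IsClassBpm ρ₁ ∧ IsNormalized ρ₁ ∧ ParamEquiv ρ ρ₁ := by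
  obtain ⟨c, hc, C, hC, hcC⟩ := h.paramEquiv_kernelAverage
  have hpos : ∀ t > 0, 0 < kernelAverage ρ t := fun t ht =>
    (mul_pos hc (h.pos t ht)).trans_le (hcC t ht).1
  have h1 := hpos 1 one_pos
  have hn : IsNormalized fun t => kernelAverage ρ t / kernelAverage ρ 1 := by
    refine ⟨fun s hs t ht hst => ?_, fun s hs t ht hst => ?_⟩
    · exact div_le_div_of_nonneg_right (h.monotoneOn_kernelAverage hs ht hst) h1.le
    · have := div_le_div_of_nonneg_right (h.antitoneOn_kernelAverage_div hs ht hst) h1.le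
      simpa only [div_right_comm] using this
  have he : ParamEquiv ρ fun t => kernelAverage ρ t / kernelAverage ρ 1 := by
    refine ⟨c / kernelAverage ρ 1, by positivity, C / kernelAverage ρ 1, by positivity,
      fun t ht => ⟨?_, ?_⟩⟩
    · rw [div_mul_eq_mul_div]
      exact div_le_div_of_nonneg_right (hcC t ht).1 h1.le
    · rw [div_mul_eq_mul_div]
      exact div_le_div_of_nonneg_right (hcC t ht).2 h1.le
  exact ⟨_, h.of_paramEquiv (fun t ht => div_pos (hpos t ht) h1) (div_self h1.ne') hn he, hn, he⟩

end IsClassBpm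

end Averaging

/-- Let `ρ ∈ ℬ^{+-}` and `γ(t) = 1/ρ̄(t⁻¹)`. Then `γ̄ ≤ ρ̄` (in particular `γ̄` is finite), and `γ`
satisfies all the conditions of `ℬ^{+-}` except possibly continuity. If `ρ(t)` is non-decreasing
and `ρ(t)/t` non-increasing, then `γ ∈ ℬ^{+-}`. Every `ρ ∈ ℬ^{+-}` is equivalent to such a
normalized `ρ₁ ∈ ℬ^{+-}`, and then `γ` is equivalent to the function `γ₁ ∈ ℬ^{+-}` built
from `ρ₁`. -/
theorem statement9 (ρ : ℝ → ℝ) (hρ : IsClassBpm ρ) :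
    (∀ t > 0, BddAbove (quotients (gam ρ) t) ∧ rbar (gam ρ) t ≤ rbar ρ t) ∧
    ((∀ t > 0, 0 < gam ρ t) ∧ gam ρ 1 = 1 ∧ FiniteIntegral (gam ρ)) ∧
    (IsNormalized ρ → IsClassBpm (gam ρ)) ∧
    (∃ ρ₁ : ℝ → ℝ, IsClassBpm ρ₁ ∧ IsNormalized ρ₁ ∧ ParamEquiv ρ ρ₁ ∧
      IsClassBpm (gam ρ₁) ∧ ParamEquiv (gam ρ) (gam ρ₁)) := by
  have hB := hρ.toIsClassB
  refine ⟨fun t ht => ⟨hB.bddAbove_quotients_gam ht, (hB.rbar_gam ht).le⟩,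
    ⟨fun t ht => hB.gam_pos ht, hB.gam_one, hρ.finiteIntegral_gam⟩,
    fun hn => hn.isClassBpm_gam hρ, ?_⟩
  obtain ⟨ρ₁, h₁, hn, he⟩ := hρ.exists_normalized
  exact ⟨ρ₁, h₁, hn, he, hn.isClassBpm_gam h₁, he.gam hB h₁.toIsClassB⟩
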